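/- Let X be a partial EFX allocation and g an unallocated good. Let s be an agent and suppose some agent i champions s and i is reachable from s in the envy graph E_X (there is a sequence of agents s = t_1, t_2, …, t_k = i with v_{t_a}(X_{t_{a+1}}) > v_{t_a}(X_{t_a}) for each a < k). Then there exists a partial EFX allocation Y with Y_1 ∪ Y_2 ∪ Y_3 ⊆ X_1 ∪ X_2 ∪ X_3 ∪ {g} such that v_j(Y_j) ≥ v_j(X_j) for every agent j and v_s(Y_s) > v_s(X_s); in particular Y Pareto dominates X. -/

import Mathlib

open Finset

/-- Additive value of a bundle `S` under per-good valuation `v`. -/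
noncomputable def val {G : Type*} (v : G → ℝ) (S : Finset G) : ℝ := ∑ g ∈ S, v g

/-- `X` is EFX: no agent `i` strongly envies agent `j`, i.e. for every good `g`
in `X j`, `v_i(X_i) ≥ v_i(X_j \ {g})`. -/
def EFX {G : Type*} [DecidableEq G] (v : Fin 3 → G → ℝ) (X : Fin 3 → Finset G) : Prop :=
  ∀ i j : Fin 3, ∀ g ∈ X j, val (v i) (X j \ {g}) ≤ val (v i) (X i)

/-- `κ_X(i,S)`: the minimum cardinality of a subset `S' ⊆ S` with `v_i(S') > v_i(X_i)`. -/
noncomputable def kappa {G : Type*} (v : G → ℝ) (Xi S : Finset G) : ℕ :=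
  sInf {n : ℕ | ∃ S' ⊆ S, S'.card = n ∧ val v Xi < val v S'}

/-- Agent `i` is a most envious agent for the bundle `S` under allocation `X`. -/
def MostEnvious {G : Type*} (v : Fin 3 → G → ℝ) (X : Fin 3 → Finset G)
    (i : Fin 3) (S : Finset G) : Prop :=
  val (v i) (X i) < val (v i) S ∧
    ∀ k : Fin 3, val (v k) (X k) < val (v k) S →
      kappa (v i) (X i) S ≤ kappa (v k) (X k) S

/-!
Shrink `X_s ∪ {g}` to a smallest subset `T` that the champion `i` strictly prefers to her own
bundle. Since `i` is most envious, anyone who preferred some `T ∖ {h}` would have a smaller `κ`, so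
nobody strongly envies `T`. Now replace `X_s` by `T`, give `T` to `i`, and move every other agent on
a simple path from `s` to `i` in the envy graph one step forward. Every agent that moves is strictly
better off, `s` among them, and raising values while passing bundles around preserves EFX.
-/

section ClosingUpAPath

variable {α : Type*} {r : α → α → Prop} {a b : α}

theorem exists_nodup_isChain_of_reflTransGen (h : Relation.ReflTransGen r a b) :
    ∃ l : List α, (a :: l).Nodup ∧ (a :: l).IsChain r ∧
      (a :: l).getLast (List.cons_ne_nil a l) = b := by
  induction h using Relation.ReflTransGen.head_induction_on with
  | refl => exact ⟨[], List.nodup_singleton b, .singleton b, rfl⟩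
  | @head a c hac _ ih =>
    obtain ⟨l, hnodup, hchain, hlast⟩ := ih
    by_cases ha : a ∈ c :: l
    · obtain ⟨l₁, l₂, hsplit⟩ := List.append_of_mem ha
      have hsuffix : a :: l₂ <:+ c :: l := ⟨l₁, hsplit.symm⟩
      exact ⟨l₂, hnodup.sublist hsuffix.sublist, hchain.suffix hsuffix,
        (hsuffix.getLast (List.cons_ne_nil a l₂)).trans hlast⟩
    · exact ⟨c :: l, List.nodup_cons.2 ⟨ha, hnodup⟩, .cons_cons hac hchain,
        (List.getLast_cons (List.cons_ne_nil c l)).trans hlast⟩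

theorem rel_formPerm_apply_of_isChain [DecidableEq α] {l : List α} (hnodup : l.Nodup)
    (hchain : l.IsChain r) (hl : l ≠ []) (ha : a ∈ l) (hlast : a ≠ l.getLast hl) :
    r a (l.formPerm a) := by
  obtain ⟨n, hn, rfl⟩ := List.getElem_of_mem ha
  have hn' : n + 1 < l.length := by
    rw [List.getLast_eq_getElem, Ne, hnodup.getElem_inj_iff] at hlast
    omega
  rw [List.formPerm_apply_lt_getElem l hnodup n hn']
  exact List.isChain_iff_getElem.1 hchain n hn'

theorem exists_perm_of_reflTransGen (h : Relation.ReflTransGen r a b) :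
    ∃ σ : Equiv.Perm α, σ b = a ∧ ∀ x ≠ b, σ x = x ∨ r x (σ x) := by
  classical
  obtain ⟨l, hnodup, hchain, rfl⟩ := exists_nodup_isChain_of_reflTransGen h
  refine ⟨(a :: l).formPerm, List.formPerm_apply_getLast a l, fun x hx => ?_⟩
  by_cases hxl : x ∈ a :: l
  · exact .inr (rel_formPerm_apply_of_isChain hnodup hchain _ hxl hx)
  · exact .inl (List.formPerm_apply_of_notMem hxl)

end ClosingUpAPath

theorem pairwise_update {ι β : Type*} [DecidableEq ι] {r : β → β → Prop} [Std.Symm r]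
    {f : ι → β} (hf : Pairwise fun i j => r (f i) (f j)) {a : ι} {b : β}
    (hb : ∀ j ≠ a, r b (f j)) :
    Pairwise fun i j => r (Function.update f a b i) (Function.update f a b j) := by
  intro i j hij
  rcases eq_or_ne i a with rfl | hi
  · simpa only [Function.update_self, Function.update_of_ne hij.symm] using hb j hij.symm
  rcases eq_or_ne j a with rfl | hj
  · simpa only [Function.update_self, Function.update_of_ne hi] using symm_of r (hb i hi)
  · simpa only [Function.update_of_ne hi, Function.update_of_ne hj] using hf hij

section Bundles

variable {G : Type*}

theorem val_mono {v : G → ℝ} {S T : Finset G} (hST : S ⊆ T) (hv : ∀ g ∈ T, 0 ≤ v g) :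
    val v S ≤ val v T :=
  Finset.sum_le_sum_of_subset_of_nonneg hST fun g hg _ => hv g hg

theorem exists_subset_card_eq_kappa {v : G → ℝ} {Xi S : Finset G} (h : val v Xi < val v S) :
    ∃ T ⊆ S, T.card = kappa v Xi S ∧ val v Xi < val v T :=
  Nat.sInf_mem (s := {n | ∃ T ⊆ S, T.card = n ∧ val v Xi < val v T})
    ⟨S.card, S, Finset.Subset.refl S, rfl, h⟩

theorem kappa_le_card {v : G → ℝ} {Xi S T : Finset G} (hTS : T ⊆ S) (h : val v Xi < val v T) :
    kappa v Xi S ≤ T.card :=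
  Nat.sInf_le ⟨T, hTS, rfl, h⟩

theorem coe_union_fin_three [DecidableEq G] (X : Fin 3 → Finset G) :
    ((X 0 ∪ X 1 ∪ X 2 : Finset G) : Set G) = ⋃ j, (X j : Set G) := by
  ext h
  simp [Fin.exists_fin_succ]

end Bundles

section Allocations

variable {ι G : Type*} {v : ι → G → ℝ} {X : ι → Finset G}

/-- `MostEnvious` for an arbitrary type `ι` of agents. -/
def IsMostEnvious (v : ι → G → ℝ) (X : ι → Finset G) (i : ι) (S : Finset G) : Prop :=
  val (v i) (X i) < val (v i) S ∧
    ∀ k, val (v k) (X k) < val (v k) S → kappa (v i) (X i) S ≤ kappa (v k) (X k) S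

theorem exists_perm_update_improves [DecidableEq ι] {s i : ι} {T : Finset G}
    (hiT : val (v i) (X i) < val (v i) T)
    (hreach : Relation.ReflTransGen (fun a b => val (v a) (X a) < val (v a) (X b)) s i) :
    ∃ σ : Equiv.Perm ι,
      (∀ j, val (v j) (X j) ≤ val (v j) (Function.update X s T (σ j))) ∧
      val (v s) (X s) < val (v s) (Function.update X s T (σ s)) := by
  obtain ⟨σ, hσi, hσ⟩ := exists_perm_of_reflTransGen hreach
  have hmove : ∀ j, j ≠ s ∧ σ j = j ∨
      val (v j) (X j) < val (v j) (Function.update X s T (σ j)) := by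
    intro j
    rcases eq_or_ne j i with rfl | hji
    · right
      rwa [hσi, Function.update_self]
    have hσs : σ j ≠ s := hσi ▸ σ.injective.ne hji
    rw [Function.update_of_ne hσs]
    exact (hσ j hji).imp_left fun hfix : σ j = j => ⟨fun hjs => hσs (hfix.trans hjs), hfix⟩
  refine ⟨σ, fun j => ?_, (hmove s).resolve_left fun h => h.1 rfl⟩
  rcases hmove j with ⟨hjs, hfix⟩ | hlt
  · rw [hfix, Function.update_of_ne hjs]
  · exact hlt.le

variable [DecidableEq G]

/-- No agent, holding her bundle in `X`, strongly envies an owner of `S`: she does not prefer `S`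
with a good removed. The bundle `S` need not belong to the allocation `X`. -/
def NotStronglyEnvied (v : ι → G → ℝ) (X : ι → Finset G) (S : Finset G) : Prop :=
  ∀ k, ∀ g ∈ S, val (v k) (S \ {g}) ≤ val (v k) (X k)

/-- `EFX` for an arbitrary type `ι` of agents, phrased bundle by bundle. -/
def IsEFX (v : ι → G → ℝ) (X : ι → Finset G) : Prop :=
  ∀ j, NotStronglyEnvied v X (X j)

theorem isEFX_iff_efx {v : Fin 3 → G → ℝ} {X : Fin 3 → Finset G} : IsEFX v X ↔ EFX v X :=
  forall_comm

theorem NotStronglyEnvied.mono {Y : ι → Finset G} {S : Finset G} (h : NotStronglyEnvied v X S)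
    (hXY : ∀ k, val (v k) (X k) ≤ val (v k) (Y k)) : NotStronglyEnvied v Y S :=
  fun k g hg => (h k g hg).trans (hXY k)

theorem IsMostEnvious.exists_subset_notStronglyEnvied {i : ι} {S : Finset G}
    (h : IsMostEnvious v X i S) (hv : ∀ k, ∀ g ∈ S, 0 ≤ v k g) :
    ∃ T ⊆ S, val (v i) (X i) < val (v i) T ∧ NotStronglyEnvied v X T := by
  obtain ⟨T, hTS, hcard, hiT⟩ := exists_subset_card_eq_kappa h.1
  refine ⟨T, hTS, hiT, fun k g hg => ?_⟩
  by_contra! hk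
  have hsub : T \ {g} ⊆ S := Finset.sdiff_subset.trans hTS
  have hkS : val (v k) (X k) < val (v k) S := hk.trans_le (val_mono hsub (hv k))
  have hcard_lt : (T \ {g}).card < T.card := by
    rw [Finset.sdiff_singleton_eq_erase]
    exact Finset.card_erase_lt_of_mem hg
  have hcard_le : T.card ≤ (T \ {g}).card :=
    calc T.card = kappa (v i) (X i) S := hcard
      _ ≤ kappa (v k) (X k) S := h.2 k hkS
      _ ≤ (T \ {g}).card := kappa_le_card hsub hk
  exact hcard_le.not_gt hcard_lt

theorem champion_reachable_gives_dominating_efx_general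
    (hdisj : Pairwise fun i j => Disjoint (X i) (X j)) (hEFX : IsEFX v X)
    {g : G} (hg : g ∉ ⋃ j, (X j : Set G)) {s i : ι}
    (hv : ∀ k, ∀ h ∈ X s ∪ {g}, 0 ≤ v k h)
    (hch : IsMostEnvious v X i (X s ∪ {g}))
    (hreach : Relation.ReflTransGen (fun a b => val (v a) (X a) < val (v a) (X b)) s i) :
    ∃ Y : ι → Finset G,
      (Pairwise fun i j => Disjoint (Y i) (Y j)) ∧
      ⋃ j, (Y j : Set G) ⊆ (⋃ j, (X j : Set G)) ∪ {g} ∧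
      IsEFX v Y ∧
      (∀ j, val (v j) (X j) ≤ val (v j) (Y j)) ∧
      val (v s) (X s) < val (v s) (Y s) := by
  classical
  obtain ⟨T, hTS, hiT, hT⟩ := hch.exists_subset_notStronglyEnvied hv
  obtain ⟨σ, hle, hlt⟩ := exists_perm_update_improves hiT hreach
  have hTdisj : ∀ j ≠ s, Disjoint T (X j) := fun j hj =>
    Finset.disjoint_of_subset_left hTS <| Finset.disjoint_union_left.2
      ⟨hdisj hj.symm, Finset.disjoint_singleton_left.2 fun hgj => hg (Set.mem_iUnion_of_mem j hgj)⟩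
  have hXsub : ∀ j, (X j : Set G) ⊆ ⋃ j, (X j : Set G) := Set.subset_iUnion fun j => (X j : Set G)
  have hTsub : (T : Set G) ⊆ (⋃ j, (X j : Set G)) ∪ {g} := by
    refine (Finset.coe_subset.2 hTS).trans ?_
    rw [Finset.coe_union, Finset.coe_singleton]
    exact Set.union_subset_union_left {g} (hXsub s)
  have hsub : ∀ j, (Function.update X s T j : Set G) ⊆ (⋃ j, (X j : Set G)) ∪ {g} :=
    (Function.forall_update_iff X fun _ S => (S : Set G) ⊆ (⋃ j, (X j : Set G)) ∪ {g}).2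
      ⟨hTsub, fun j _ => (hXsub j).trans Set.subset_union_left⟩
  have henvy : ∀ j, NotStronglyEnvied v X (Function.update X s T j) :=
    (Function.forall_update_iff X fun _ S => NotStronglyEnvied v X S).2 ⟨hT, fun j _ => hEFX j⟩
  exact ⟨fun j => Function.update X s T (σ j),
    (pairwise_update (r := Disjoint) hdisj hTdisj).comp_of_injective σ.injective,
    Set.iUnion_subset fun j => hsub (σ j), fun j => (henvy (σ j)).mono hle, hle, hlt⟩

end Allocations

/-- If some agent `i` champions `s` and `i` is reachable from `s` in the envy graph, then
there is a Pareto dominating partial EFX allocation (using only goods of `X` plus `g`)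
in which `s` is strictly better off. -/
theorem champion_reachable_gives_dominating_efx {G : Type*} [DecidableEq G] (M : Finset G)
    (v : Fin 3 → G → ℝ) (hv : ∀ i : Fin 3, ∀ g ∈ M, 0 ≤ v i g)
    (X : Fin 3 → Finset G) (hXM : ∀ i, X i ⊆ M)
    (hdisj : ∀ i j, i ≠ j → Disjoint (X i) (X j))
    (hEFX : EFX v X)
    (g : G) (hg : g ∈ M) (hun : g ∉ X 0 ∪ X 1 ∪ X 2)
    (s i : Fin 3)
    (hch : MostEnvious v X i (X s ∪ {g}))
    (hreach : Relation.ReflTransGen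
      (fun a b => val (v a) (X a) < val (v a) (X b)) s i) :
    ∃ Y : Fin 3 → Finset G,
      (∀ i, Y i ⊆ M) ∧
      (∀ i j, i ≠ j → Disjoint (Y i) (Y j)) ∧
      Y 0 ∪ Y 1 ∪ Y 2 ⊆ X 0 ∪ X 1 ∪ X 2 ∪ {g} ∧
      EFX v Y ∧
      (∀ j, val (v j) (X j) ≤ val (v j) (Y j)) ∧
      val (v s) (X s) < val (v s) (Y s) := by
  have hXs : X s ∪ {g} ⊆ M := Finset.union_subset (hXM s) (Finset.singleton_subset_iff.2 hg)
  obtain ⟨Y, hYdisj, hYsub, hYEFX, hle, hlt⟩ :=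
    champion_reachable_gives_dominating_efx_general hdisj (isEFX_iff_efx.2 hEFX)
      (by rwa [← coe_union_fin_three, Finset.mem_coe]) (fun k h hh => hv k h (hXs hh)) hch hreach
  have hYM : ∀ j, Y j ⊆ M := fun j h hh =>
    (hYsub (Set.mem_iUnion_of_mem j hh)).elim
      (fun hX => (Set.mem_iUnion.1 hX).elim fun k hk => hXM k hk) fun hhg => hhg ▸ hg
  rw [← coe_union_fin_three, ← coe_union_fin_three, ← Finset.coe_singleton, ← Finset.coe_union,
    Finset.coe_subset] at hYsub
  exact ⟨Y, hYM, hYdisj, hYsub, isEFX_iff_efx.1 hYEFX, hle, hlt⟩
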